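/- arXiv:1409.3127 — 2 statements merged into one kernel-verified Lean document; each statement's English description precedes it below -/
import Mathlib

section
/- Fix n ≥ 2 and consider the (n+1)-cube I^{n+1}. For every absolutely incoming (n−1)-face f and every absolutely outgoing (n−1)-face h of I^{n+1}, there exist an (n−1)-face g and n-faces u, v of I^{n+1} such that Γ_{n+1} contains the directed path f → u → g → v → h; that is, f is an incoming subface of u, g is an outgoing subface of u and an incoming subface of v, and h is an outgoing subface of v. In particular, every absolutely incoming (n−1)-face precedes every absolutely outgoing (n−1)-face in the partial order generated by the edges of Γ_{n+1}. -/
/-- A face of the `N`-dimensional cube `I^N`, encoded as a function assigning to each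
coordinate position either a digit (`some false` = 0, `some true` = 1) or an
asterisk (`none`). -/
abbrev CubeFace (N : ℕ) := Fin N → Option Bool

/-- `τ` is a `k`-face: exactly `k` positions carry an asterisk. -/
def IsFace {N : ℕ} (k : ℕ) (τ : CubeFace N) : Prop :=
  (Finset.filter (fun i => τ i = none) Finset.univ).card = k

/-- The digit `κ` associated to the asterisk position `p` of `f`: if `p` is the `k`-th
asterisk position of `f` (counting 1-based from the left), then `κ = 0` (i.e. `false`)
for odd `k` and `κ = 1` (i.e. `true`) for even `k`.  Equivalently, `κ` is `true` iff the
number of asterisk positions strictly before `p` is odd. -/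
def kappa {N : ℕ} (f : CubeFace N) (p : Fin N) : Bool :=
  decide (Odd ((Finset.filter (fun q => q < p ∧ f q = none) Finset.univ).card))

/-- `g` is obtained from `f` by replacing the asterisk at position `p` by the digit `d`. -/
def SubfaceAt {N : ℕ} (f g : CubeFace N) (p : Fin N) (d : Bool) : Prop :=
  f p = none ∧ g p = some d ∧ ∀ q, q ≠ p → g q = f q

/-- `g` is an incoming subface of `f`: it is obtained from `f` by replacing the asterisk
at some position `p` by the digit `κ(f, p)`. -/
def Incoming {N : ℕ} (f g : CubeFace N) : Prop := ∃ p, SubfaceAt f g p (kappa f p)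

/-- `g` is an outgoing subface of `f`: it is obtained from `f` by replacing the asterisk
at some position `p` by the digit different from `κ(f, p)`. -/
def Outgoing {N : ℕ} (f g : CubeFace N) : Prop := ∃ p, SubfaceAt f g p (!kappa f p)

/-- The order of a face `g`: the number of `n`-faces of the cube for which `g` is an
incoming subface. -/
noncomputable def faceOrder {N : ℕ} (n : ℕ) (g : CubeFace N) : ℕ :=
  Nat.card {f : CubeFace N // IsFace n f ∧ Incoming f g}

/-- The edge relation of the directed graph `Γ_{n+1}`: its vertices are the `n`-faces
and `(n-1)`-faces of `I^{n+1}`; there is an edge from an `(n-1)`-face `g` to an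
`n`-face `f` if `g` is an incoming subface of `f`, and an edge from `f` to `g` if `g`
is an outgoing subface of `f`. -/
def GammaEdge {N : ℕ} (n : ℕ) (a b : CubeFace N) : Prop :=
  (IsFace (n - 1) a ∧ IsFace n b ∧ Incoming b a) ∨
  (IsFace n a ∧ IsFace (n - 1) b ∧ Outgoing a b)

namespace CubeAux

/-- The face with a single digit `x` at `p`. -/
def F1 {N : ℕ} (p : Fin N) (x : Bool) : CubeFace N := fun i => if i = p then some x else none

/-- The face with digits `x` at `p` and `y` at `q`. -/
def F2 {N : ℕ} (p : Fin N) (x : Bool) (q : Fin N) (y : Bool) : CubeFace N :=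
  fun i => if i = p then some x else if i = q then some y else none

theorem F2_comm {N : ℕ} {p q : Fin N} (hpq : p ≠ q) (x y : Bool) :
    F2 p x q y = F2 q y p x := by
  funext i
  unfold F2
  split_ifs <;> simp_all

theorem isFace_F1 {n : ℕ} (p : Fin (n + 1)) (x : Bool) : IsFace n (F1 p x) := by
  unfold IsFace
  have : Finset.filter (fun i => F1 p x i = none) Finset.univ = {p}ᶜ := by
    ext i; simp [F1]
  rw [this, Finset.card_compl]
  simp

theorem isFace_F2 {n : ℕ} {p q : Fin (n + 1)} (hpq : p ≠ q) (x y : Bool) :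
    IsFace (n - 1) (F2 p x q y) := by
  unfold IsFace
  have : Finset.filter (fun i => F2 p x q y i = none) Finset.univ = {p, q}ᶜ := by
    ext i
    rw [Finset.mem_filter]
    simp only [F2, Finset.mem_univ, true_and, Finset.mem_compl,
      Finset.mem_insert, Finset.mem_singleton]
    split_ifs <;> simp_all
  rw [this, Finset.card_compl, Finset.card_pair hpq]
  simp

theorem exists_F2 {n : ℕ} (hn : 2 ≤ n) (f : CubeFace (n + 1)) (hf : IsFace (n - 1) f) :
    ∃ a b x y, a < b ∧ f = F2 a x b y := by
  unfold IsFace at hf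
  have h2 : (Finset.filter (fun i => f i = none) Finset.univ)ᶜ.card = 2 := by
    rw [Finset.card_compl, hf, Fintype.card_fin]; omega
  obtain ⟨a, b, hab, hs⟩ := Finset.card_eq_two.mp h2
  have key : ∀ i, f i ≠ none ↔ i = a ∨ i = b := by
    intro i
    have := congrArg (fun s => i ∈ s) hs
    simpa using this
  obtain ⟨x, hx⟩ := Option.ne_none_iff_exists'.mp ((key a).2 (Or.inl rfl))
  obtain ⟨y, hy⟩ := Option.ne_none_iff_exists'.mp ((key b).2 (Or.inr rfl))
  have hE : f = F2 a x b y := by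
    funext i
    unfold F2
    split_ifs with h1 h2
    · rw [h1, hx]
    · rw [h2, hy]
    · by_contra h3
      rcases (key i).1 h3 with h | h <;> contradiction
  rcases lt_or_gt_of_ne hab with h | h
  · exact ⟨a, b, x, y, h, hE⟩
  · exact ⟨b, a, y, x, h, hE.trans (F2_comm hab x y)⟩

theorem kappa_lt {N : ℕ} {p q : Fin N} (x : Bool) (h : q < p) :
    kappa (F1 p x) q = decide (Odd q.val) := by
  unfold kappa
  have : Finset.filter (fun i => i < q ∧ F1 p x i = none) Finset.univ = Finset.Iio q := by
    ext i
    rw [Finset.mem_filter]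
    simp only [F1, Finset.mem_univ, true_and, Finset.mem_Iio]
    constructor
    · exact fun h => h.1
    · intro hi
      have : i ≠ p := (hi.trans h).ne
      simp [hi, this]
  rw [this, Fin.card_Iio]

theorem kappa_gt {N : ℕ} {p q : Fin N} (x : Bool) (h : p < q) :
    kappa (F1 p x) q = !decide (Odd q.val) := by
  unfold kappa
  have : Finset.filter (fun i => i < q ∧ F1 p x i = none) Finset.univ
      = (Finset.Iio q).erase p := by
    ext i
    rw [Finset.mem_filter]
    simp only [F1, Finset.mem_univ, true_and, Finset.mem_Iio,
      Finset.mem_erase]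
    by_cases hi : i = p <;> simp [hi]
  rw [this, Finset.card_erase_of_mem (Finset.mem_Iio.2 h), Fin.card_Iio, ← decide_not]
  have h' : p.val < q.val := h
  congr 1
  rw [Nat.odd_iff, Nat.odd_iff]
  apply propext
  omega

theorem subface_iff {N : ℕ} {p q : Fin N} (hpq : p ≠ q) (x y d : Bool) (r : Fin N) :
    SubfaceAt (F1 p x) (F2 p x q y) r d ↔ r = q ∧ y = d := by
  constructor
  · rintro ⟨h1, h2, h3⟩
    have hr : r = q := by
      by_contra hr
      have := h3 q (Ne.symm hr)
      simp [F1, F2, hpq.symm] at this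
    subst hr
    simpa [F2, hpq.symm] using h2
  · rintro ⟨rfl, rfl⟩
    refine ⟨by simp [F1, hpq.symm], by simp [F2, hpq.symm], ?_⟩
    intro i hi
    simp [F1, F2, hi]

theorem incoming_iff {N : ℕ} {p q : Fin N} (hpq : p ≠ q) (x y : Bool) :
    Incoming (F1 p x) (F2 p x q y) ↔ y = kappa (F1 p x) q := by
  simp [Incoming, subface_iff hpq]

theorem outgoing_iff {N : ℕ} {p q : Fin N} (hpq : p ≠ q) (x y : Bool) :
    Outgoing (F1 p x) (F2 p x q y) ↔ y = !kappa (F1 p x) q := by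
  simp [Outgoing, subface_iff hpq]

theorem incoming_cases {N : ℕ} {p q : Fin N} (hpq : p ≠ q) (x y : Bool) (F : CubeFace N)
    (h : Incoming F (F2 p x q y)) : F = F1 p x ∨ F = F1 q y := by
  obtain ⟨r, h1, h2, h3⟩ := h
  have hr : r = p ∨ r = q := by
    by_contra hr
    push Not at hr
    simp [F2, hr.1, hr.2] at h2
  rcases hr with rfl | rfl
  · right
    funext i
    by_cases hi : i = r
    · subst hi; simp [F1, h1, hpq]
    · rw [← h3 i hi]; simp [F1, F2, hi]
  · left
    funext i
    by_cases hi : i = r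
    · subst hi; simp [F1, h1, hpq.symm]
    · rw [← h3 i hi]; simp [F1, F2, hi]

theorem order_two {n : ℕ} {p q : Fin (n + 1)} (hpq : p < q) (x y : Bool)
    (h : faceOrder n (F2 p x q y) = 2) :
    x = decide (Odd p.val) ∧ y = !decide (Odd q.val) := by
  have hc : Set.ncard {F : CubeFace (n + 1) | IsFace n F ∧ Incoming F (F2 p x q y)} = 2 := h
  have hsub : {F : CubeFace (n + 1) | IsFace n F ∧ Incoming F (F2 p x q y)} ⊆
      {F1 p x, F1 q y} := fun F hF => incoming_cases hpq.ne x y F hF.2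
  have heq := Set.eq_of_subset_of_ncard_le hsub
    (by rw [hc]; exact (Set.ncard_insert_le _ _).trans (by simp)) (Set.toFinite _)
  have hA : F1 p x ∈ {F : CubeFace (n + 1) | IsFace n F ∧ Incoming F (F2 p x q y)} := by
    rw [heq]; simp
  have hB : F1 q y ∈ {F : CubeFace (n + 1) | IsFace n F ∧ Incoming F (F2 p x q y)} := by
    rw [heq]; simp
  have hA' := (incoming_iff hpq.ne x y).1 hA.2
  have hB' := hB.2
  rw [F2_comm hpq.ne, incoming_iff hpq.ne', kappa_lt _ hpq] at hB'
  rw [kappa_gt _ hpq] at hA'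
  exact ⟨hB', hA'⟩

theorem order_zero {n : ℕ} {p q : Fin (n + 1)} (hpq : p < q) (x y : Bool)
    (h : faceOrder n (F2 p x q y) = 0) :
    x = (!decide (Odd p.val)) ∧ y = decide (Odd q.val) := by
  have hc : Set.ncard {F : CubeFace (n + 1) | IsFace n F ∧ Incoming F (F2 p x q y)} = 0 := h
  rw [Set.ncard_eq_zero (Set.toFinite _)] at hc
  have hno : ∀ F, IsFace n F → ¬ Incoming F (F2 p x q y) := by
    intro F h1 h2
    have : F ∈ {F : CubeFace (n + 1) | IsFace n F ∧ Incoming F (F2 p x q y)} := ⟨h1, h2⟩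
    rw [hc] at this
    exact this
  have hA := hno _ (isFace_F1 p x)
  have hB := hno _ (isFace_F1 q y)
  rw [incoming_iff hpq.ne, kappa_gt _ hpq] at hA
  rw [F2_comm hpq.ne, incoming_iff hpq.ne', kappa_lt _ hpq] at hB
  constructor
  · revert hB; cases x <;> cases decide (Odd p.val) <;> simp
  · revert hA; cases y <;> cases decide (Odd q.val) <;> simp

end CubeAux

open CubeAux

/-- In the `(n+1)`-cube, every absolutely incoming `(n-1)`-face `f` (order `2`) is
joined to every absolutely outgoing `(n-1)`-face `h` (order `0`) by a directed path
`f → u → g → v → h` in `Γ_{n+1}`; in particular `f` precedes `h` in the partial order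
generated by the edges of `Γ_{n+1}`. -/
theorem stmt7 (n : ℕ) (hn : 2 ≤ n) (f h : CubeFace (n + 1))
    (hf1 : IsFace (n - 1) f) (hf2 : faceOrder n f = 2)
    (hh1 : IsFace (n - 1) h) (hh2 : faceOrder n h = 0) :
    (∃ (g u v : CubeFace (n + 1)),
        IsFace n u ∧ IsFace n v ∧ IsFace (n - 1) g ∧
        Incoming u f ∧ Outgoing u g ∧ Incoming v g ∧ Outgoing v h) ∧
    Relation.TransGen (GammaEdge n) f h := by
  have main : ∃ (g u v : CubeFace (n + 1)),
        IsFace n u ∧ IsFace n v ∧ IsFace (n - 1) g ∧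
        Incoming u f ∧ Outgoing u g ∧ Incoming v g ∧ Outgoing v h := by
    obtain ⟨a, b, x, y, hab, rfl⟩ := exists_F2 hn f hf1
    obtain ⟨c, d, z, w, hcd, rfl⟩ := exists_F2 hn h hh1
    obtain ⟨hx, hy⟩ := order_two hab x y hf2
    obtain ⟨hz, hw⟩ := order_zero hcd z w hh2
    by_cases had : a < d
    · refine ⟨F2 a x d w, F1 a x, F1 d w, isFace_F1 _ _, isFace_F1 _ _, isFace_F2 had.ne _ _,
        ?_, ?_, ?_, ?_⟩
      · rw [incoming_iff hab.ne, kappa_gt _ hab, hy]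
      · rw [outgoing_iff had.ne, kappa_gt _ had, hw, Bool.not_not]
      · rw [F2_comm had.ne, incoming_iff had.ne', kappa_lt _ had, hx]
      · rw [F2_comm hcd.ne, outgoing_iff hcd.ne', kappa_lt _ hcd, hz]
    · have hcb : c < b := hcd.trans_le ((not_lt.1 had).trans hab.le)
      refine ⟨F2 b y c z, F1 b y, F1 c z, isFace_F1 _ _, isFace_F1 _ _, isFace_F2 hcb.ne' _ _,
        ?_, ?_, ?_, ?_⟩
      · rw [F2_comm hab.ne, incoming_iff hab.ne', kappa_lt _ hab, hx]
      · rw [outgoing_iff hcb.ne', kappa_lt _ hcb, hz]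
      · rw [F2_comm hcb.ne', incoming_iff hcb.ne, kappa_gt _ hcb, hy]
      · rw [outgoing_iff hcd.ne, kappa_gt _ hcd, hw, Bool.not_not]
  refine ⟨main, ?_⟩
  obtain ⟨g, u, v, hu, hv, hg, h1, h2, h3, h4⟩ := main
  have e1 : GammaEdge n f u := Or.inl ⟨hf1, hu, h1⟩
  have e2 : GammaEdge n u g := Or.inr ⟨hu, hg, h2⟩
  have e3 : GammaEdge n g v := Or.inl ⟨hg, hv, h3⟩
  have e4 : GammaEdge n v h := Or.inr ⟨hv, hh1, h4⟩
  exact (((Relation.TransGen.single e1).tail e2).tail e3).tail e4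
end

section
/- Let n ≥ 2, let X be a set, and let R : X^n → X^n. Assume R satisfies the set-theoretic n-simplex equation, formulated as follows: for every map c_0 from the set of absolutely incoming (n−1)-faces of the (n+1)-cube I^{n+1} to X, there exists a permitted coloring of I^{n+1} whose restriction to the absolutely incoming (n−1)-faces is c_0. Then for every N ≥ n and every map c_0 from the set of absolutely incoming (n−1)-faces of I^N to X, there exists a unique permitted coloring of I^N whose restriction to the absolutely incoming (n−1)-faces is c_0. -/
/-- The subtype of `k`-faces of `I^N`. -/
def FaceT (N k : ℕ) := {τ : CubeFace N // IsFace k τ}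

/-- The incoming subface of an `n`-face `f` obtained by replacing the asterisk at
position `p` by the digit `κ(f, p)`. -/
def inAt {N : ℕ} (f : CubeFace N) (p : Fin N) : CubeFace N :=
  fun q => if q = p then some (kappa f p) else f q

/-- The outgoing subface of an `n`-face `f` obtained by replacing the asterisk at
position `p` by the digit different from `κ(f, p)`. -/
def outAt {N : ℕ} (f : CubeFace N) (p : Fin N) : CubeFace N :=
  fun q => if q = p then some (!kappa f p) else f q

/-- A coloring `c` of the `(n-1)`-faces of `I^N` is permitted with respect to
`R : Xⁿ → Xⁿ` if for every `n`-face `f`, with asterisk positions enumerated in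
increasing order by `p : Fin n → Fin N`, the colors of the outgoing `(n-1)`-subfaces
(listed in increasing order of the replaced asterisk position) are the image under `R`
of the colors of the incoming `(n-1)`-subfaces (listed likewise). -/
def Permitted {N n : ℕ} {X : Type*} (R : (Fin n → X) → (Fin n → X))
    (c : FaceT N (n - 1) → X) : Prop :=
  ∀ f : CubeFace N, IsFace n f →
    ∀ p : Fin n → Fin N, StrictMono p → (∀ k, f (p k) = none) →
      ∀ gIn gOut : Fin n → FaceT N (n - 1),
        (∀ k, (gIn k).1 = inAt f (p k)) → (∀ k, (gOut k).1 = outAt f (p k)) →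
        (fun k => c (gOut k)) = R (fun k => c (gIn k))

/-- The absolutely incoming `(n-1)`-faces of `I^N`: those of maximal order `N - n + 1`. -/
def AbsIn (N n : ℕ) := {g : FaceT N (n - 1) // faceOrder n g.1 = N - n + 1}

/-- Restriction of a coloring to the absolutely incoming `(n-1)`-faces. -/
def resAbs {N n : ℕ} {X : Type*} (c : FaceT N (n - 1) → X) : AbsIn N n → X :=
  fun g => c g.1

namespace CubeAux

/-- Replace the symbol at position `p` by an asterisk. -/
def up {N : ℕ} (g : CubeFace N) (p : Fin N) : CubeFace N := Function.update g p none

/-- The digit at `p` makes `g` an outgoing subface of `up g p`. -/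
def Bad {N : ℕ} (g : CubeFace N) (p : Fin N) : Prop := g p = some (!kappa g p)

theorem kappa_congr {N : ℕ} {f g : CubeFace N} {p : Fin N} (h : ∀ q, q < p → f q = g q) :
    kappa f p = kappa g p := by
  unfold kappa
  have : (Finset.filter (fun q => q < p ∧ f q = none) Finset.univ)
      = (Finset.filter (fun q => q < p ∧ g q = none) Finset.univ) := by
    apply Finset.filter_congr
    intro q _
    constructor
    · rintro ⟨h1, h2⟩; exact ⟨h1, by rw [← h q h1]; exact h2⟩
    · rintro ⟨h1, h2⟩; exact ⟨h1, by rw [h q h1]; exact h2⟩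
  rw [this]

/-- The ranking of a position: good digit, asterisk, bad digit. -/
def rank {N : ℕ} (g : CubeFace N) (i : Fin N) : Fin 3 :=
  if g i = none then 1 else if g i = some (kappa g i) then 0 else 2

/-- The lexicographic key. -/
def key {N : ℕ} (g : CubeFace N) : Lex (Fin N → Fin 3) := toLex (rank g)

theorem rank_congr {N : ℕ} {f g : CubeFace N} {p : Fin N} (h : ∀ q, q ≤ p → f q = g q) :
    rank f p = rank g p := by
  unfold rank
  rw [h p le_rfl, kappa_congr (fun q hq => h q hq.le)]

theorem kappa_inAt {N : ℕ} (f : CubeFace N) (p i : Fin N) (h : i ≤ p) :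
    kappa (inAt f p) i = kappa f i := by
  apply kappa_congr
  intro q hq
  simp [inAt, (lt_of_lt_of_le hq h).ne]

theorem kappa_outAt {N : ℕ} (f : CubeFace N) (p i : Fin N) (h : i ≤ p) :
    kappa (outAt f p) i = kappa f i := by
  apply kappa_congr
  intro q hq
  simp [outAt, (lt_of_lt_of_le hq h).ne]

theorem kappa_up {N : ℕ} (f : CubeFace N) (p i : Fin N) (h : i ≤ p) :
    kappa (up f p) i = kappa f i := by
  apply kappa_congr
  intro q hq
  simp [up, (lt_of_lt_of_le hq h).ne]

theorem key_lt {N : ℕ} (f : CubeFace N) (p q : Fin N) (hp : f p = none) (hq : f q = none) :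
    key (inAt f p) < key (outAt f q) := by
  have hpre : ∀ j, j < p → j < q → rank (inAt f p) j = rank (outAt f q) j := by
    intro j h1 h2
    apply rank_congr
    intro r hr
    simp [inAt, outAt, (lt_of_le_of_lt hr h1).ne, (lt_of_le_of_lt hr h2).ne]
  have hip : rank (inAt f p) p = 0 := by
    unfold rank
    rw [kappa_inAt f p p le_rfl]
    simp [inAt]
  have hoq : rank (outAt f q) q = 2 := by
    unfold rank
    rw [kappa_outAt f q q le_rfl]
    simp [outAt]
  rcases lt_trichotomy p q with h | h | h
  · refine ⟨p, fun j hj => hpre j hj (hj.trans h), ?_⟩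
    change rank (inAt f p) p < rank (outAt f q) p
    have : rank (outAt f q) p = 1 := by simp [rank, outAt, h.ne, hp]
    rw [hip, this]; decide
  · subst h
    refine ⟨p, fun j hj => hpre j hj hj, ?_⟩
    change rank (inAt f p) p < rank (outAt f p) p
    rw [hip, hoq]; decide
  · refine ⟨q, fun j hj => hpre j (hj.trans h) hj, ?_⟩
    change rank (inAt f p) q < rank (outAt f q) q
    have : rank (inAt f p) q = 1 := by simp [rank, inAt, h.ne, hq]
    rw [hoq, this]; decide

theorem outAt_up {N : ℕ} {g : CubeFace N} {p : Fin N} (h : Bad g p) :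
    outAt (up g p) p = g := by
  funext q
  unfold outAt
  split_ifs with hq
  · subst hq; rw [kappa_up _ _ _ le_rfl]; exact h.symm
  · simp [up, hq]

theorem bad_outAt {N : ℕ} (f : CubeFace N) (p : Fin N) : Bad (outAt f p) p := by
  unfold Bad
  rw [kappa_outAt _ _ _ le_rfl]; simp [outAt]

theorem up_outAt {N : ℕ} {f : CubeFace N} {p : Fin N} (h : f p = none) :
    up (outAt f p) p = f := by
  funext q
  by_cases hq : q = p
  · subst hq; simp [up, h]
  · simp [up, outAt, hq]

theorem isFace_up {N m : ℕ} {g : CubeFace N} {p : Fin N} (hg : IsFace m g) (hp : g p ≠ none) :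
    IsFace (m + 1) (up g p) := by
  unfold IsFace at *
  have : (Finset.filter (fun i => up g p i = none) Finset.univ)
      = insert p (Finset.filter (fun i => g i = none) Finset.univ) := by
    ext i
    simp only [Finset.mem_filter, Finset.mem_univ, true_and, Finset.mem_insert]
    by_cases hi : i = p
    · subst hi; simp [up]
    · simp [up, hi]
  rw [this, Finset.card_insert_of_notMem (by simpa using hp), hg]

theorem isFace_repl {N m : ℕ} {f : CubeFace N} {p : Fin N} (hf : IsFace (m + 1) f)
    (hp : f p = none) (d : Bool) : IsFace m (fun q => if q = p then some d else f q) := by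
  unfold IsFace at *
  have : (Finset.filter (fun i => (if i = p then some d else f i) = none) Finset.univ)
      = (Finset.filter (fun i => f i = none) Finset.univ).erase p := by
    ext i
    by_cases hi : i = p
    · subst hi; simp
    · simp [hi]
  rw [this, Finset.card_erase_of_mem (by simpa using hp), hf]; rfl

theorem isFace_inAt {N m : ℕ} {f : CubeFace N} {p : Fin N} (hf : IsFace (m + 1) f)
    (hp : f p = none) : IsFace m (inAt f p) := isFace_repl hf hp _

theorem isFace_outAt {N m : ℕ} {f : CubeFace N} {p : Fin N} (hf : IsFace (m + 1) f)
    (hp : f p = none) : IsFace m (outAt f p) := isFace_repl hf hp _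

/-- Data witnessing how `g` is computed via the position `p`. -/
structure Dat {N m : ℕ} (g : FaceT N m) (p : Fin N) (e : Fin (m + 1) → Fin N)
    (k : Fin (m + 1)) (gIn : Fin (m + 1) → FaceT N m) : Prop where
  bad : Bad g.1 p
  mono : StrictMono e
  star : ∀ j, up g.1 p (e j) = none
  inn : ∀ j, (gIn j).1 = inAt (up g.1 p) (e j)
  idx : e k = p

theorem Dat.lt {N m : ℕ} {g : FaceT N m} {p : Fin N} {e : Fin (m + 1) → Fin N}
    {k : Fin (m + 1)} {gIn : Fin (m + 1) → FaceT N m} (h : Dat g p e k gIn) (j : Fin (m + 1)) :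
    key (gIn j).1 < key g.1 := by
  have := key_lt (up g.1 p) (e j) p (h.star j) (by simp [up])
  rwa [outAt_up h.bad, ← h.inn j] at this

theorem Dat.face {N m : ℕ} {g : FaceT N m} {p : Fin N} (h : Bad g.1 p) :
    IsFace (m + 1) (up g.1 p) := isFace_up g.2 (by rw [h]; simp)

theorem Dat.exists {N m : ℕ} (g : FaceT N m) (p : Fin N) (h : Bad g.1 p) :
    ∃ e k gIn, Dat g p e k gIn := by
  have hf := Dat.face h
  let S := (Finset.filter (fun i => up g.1 p i = none) Finset.univ)
  have hS : S.card = m + 1 := hf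
  have hst : ∀ j, up g.1 p (S.orderEmbOfFin hS j) = none := fun j => by
    exact (Finset.mem_filter.1 (S.orderEmbOfFin_mem hS j)).2
  have hr : p ∈ Set.range (S.orderEmbOfFin hS) := by
    rw [Finset.range_orderEmbOfFin]
    exact Finset.mem_filter.2 ⟨Finset.mem_univ _, by simp [up]⟩
  obtain ⟨k, hk⟩ := hr
  exact ⟨S.orderEmbOfFin hS, k, fun j => ⟨inAt (up g.1 p) (S.orderEmbOfFin hS j),
    isFace_inAt hf (hst j)⟩, h, (S.orderEmbOfFin hS).strictMono, hst, fun j => rfl, hk⟩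

theorem Dat.unique {N m : ℕ} {g : FaceT N m} {p : Fin N} {e e' : Fin (m + 1) → Fin N}
    {k k' : Fin (m + 1)} {gIn gIn' : Fin (m + 1) → FaceT N m} (h : Dat g p e k gIn)
    (h' : Dat g p e' k' gIn') : gIn = gIn' ∧ k = k' := by
  have hf := Dat.face h.bad
  let S := (Finset.filter (fun i => up g.1 p i = none) Finset.univ)
  have hS : S.card = m + 1 := hf
  have h1 := Finset.orderEmbOfFin_unique hS (f := e) (fun j => by simpa [S] using h.star j) h.mono
  have h2 := Finset.orderEmbOfFin_unique hS (f := e') (fun j => by simpa [S] using h'.star j)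
    h'.mono
  have he : e = e' := h1.trans h2.symm
  subst he
  refine ⟨?_, h.mono.injective (h.idx.trans h'.idx.symm)⟩
  funext j
  exact Subtype.ext ((h.inn j).trans (h'.inn j).symm)

theorem permitted_dat {N m : ℕ} {X : Type*} {R : (Fin (m + 1) → X) → (Fin (m + 1) → X)}
    {c : FaceT N m → X} (hc : Permitted (n := m + 1) R c) {g : FaceT N m} {p : Fin N}
    {e : Fin (m + 1) → Fin N}
    {k : Fin (m + 1)} {gIn : Fin (m + 1) → FaceT N m} (h : Dat g p e k gIn) :
    c g = R (fun j => c (gIn j)) k := by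
  have hf := Dat.face h.bad
  have := hc (up g.1 p) hf e h.mono h.star gIn
    (fun j => ⟨outAt (up g.1 p) (e j), isFace_outAt hf (h.star j)⟩) h.inn (fun j => rfl)
  have h2 := congrFun this k
  rw [← h2]
  congr 1
  apply Subtype.ext
  change g.1 = outAt (up g.1 p) (e k)
  rw [h.idx, outAt_up h.bad]

theorem permitted_of {N m : ℕ} {X : Type*} {R : (Fin (m + 1) → X) → (Fin (m + 1) → X)}
    {c : FaceT N m → X}
    (H : ∀ g p e k gIn, Dat g p e k gIn → c g = R (fun j => c (gIn j)) k) :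
    Permitted (n := m + 1) R c := by
  intro f hf e he hs gIn gOut hin hout
  funext k
  have hu : up (gOut k).1 (e k) = f := by rw [hout, up_outAt (hs k)]
  refine H (gOut k) (e k) e k gIn ⟨?_, he, ?_, ?_, rfl⟩
  · rw [hout]; exact bad_outAt _ _
  · rw [hu]; exact hs
  · rw [hu]; exact hin

/-- Absolutely incoming = no bad digit. -/
theorem order_iff {N m : ℕ} (hN : m + 1 ≤ N) (g : CubeFace N) (hg : IsFace m g) :
    faceOrder (m + 1) g = N - (m + 1) + 1 ↔ ∀ p, ¬ Bad g p := by
  have hcard : faceOrder (m + 1) g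
      = (Finset.filter (fun i => g i = some (kappa g i)) Finset.univ).card := by
    unfold faceOrder
    rw [← Fintype.card_subtype, ← Nat.card_eq_fintype_card]
    symm
    refine Nat.card_eq_of_bijective
      (fun p : {i // g i = some (kappa g i)} =>
        (⟨up g p.1, isFace_up hg (by rw [p.2]; simp), p.1, by simp [up], by
          rw [kappa_up _ _ _ le_rfl]; exact p.2, fun q hq => by simp [up, hq]⟩ :
          {f : CubeFace N // IsFace (m + 1) f ∧ Incoming f g})) ⟨?_, ?_⟩
    · rintro ⟨p, hp⟩ ⟨q, hq⟩ h
      have h1 := congrArg Subtype.val h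
      have h2 := congrFun h1 p
      apply Subtype.ext
      by_contra hne
      change ¬ p = q at hne
      simp [up, hne, hp] at h2
    · rintro ⟨f, hf, p, h1, h2, h3⟩
      have hu : up g p = f := by
        funext q
        by_cases hq : q = p
        · subst hq; simp [up, h1]
        · simp [up, hq, h3 q hq]
      refine ⟨⟨p, ?_⟩, Subtype.ext hu⟩
      rw [h2, ← hu, kappa_up _ _ _ le_rfl]
  have hdig : (Finset.filter (fun i => ¬ g i = none) Finset.univ).card = N - (m + 1) + 1 := by
    have := Finset.card_filter_add_card_filter_not (s := (Finset.univ : Finset (Fin N)))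
      (fun i => g i = none)
    unfold IsFace at hg
    rw [hg, Finset.card_univ, Fintype.card_fin] at this
    omega
  have hsub : (Finset.filter (fun i => g i = some (kappa g i)) Finset.univ)
      ⊆ (Finset.filter (fun i => ¬ g i = none) Finset.univ) := by
    intro i
    simp only [Finset.mem_filter, Finset.mem_univ, true_and]
    intro h; rw [h]; simp
  rw [hcard, ← hdig]
  constructor
  · intro h p hp
    have he := Finset.eq_of_subset_of_card_le hsub h.ge
    have : p ∈ (Finset.filter (fun i => g i = some (kappa g i)) Finset.univ) := by
      rw [he]; simp only [Finset.mem_filter, Finset.mem_univ, true_and]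
      rw [hp]; simp
    simp only [Finset.mem_filter, Finset.mem_univ, true_and] at this
    rw [hp] at this
    simp at this
  · intro h
    congr 1
    apply Finset.Subset.antisymm hsub
    intro i
    simp only [Finset.mem_filter, Finset.mem_univ, true_and]
    intro hi
    have := h i
    unfold Bad at this
    cases hgi : g i with
    | none => exact absurd hgi hi
    | some b =>
      rw [hgi] at this
      cases b <;> cases hk : kappa g i <;> simp_all

section Embed

variable {N M : ℕ} {s : Fin M → Fin N} {g : CubeFace N}

theorem ext_apply (hs : StrictMono s) (τ : CubeFace M) (j : Fin M) :
    Function.extend s τ g (s j) = τ j := hs.injective.extend_apply _ _ _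

theorem ext_none (hs : StrictMono s) (hg : ∀ i, (¬ ∃ j, s j = i) → g i ≠ none)
    (τ : CubeFace M) (i : Fin N) :
    Function.extend s τ g i = none ↔ ∃ j, s j = i ∧ τ j = none := by
  by_cases h : ∃ j, s j = i
  · obtain ⟨j, rfl⟩ := h
    rw [ext_apply hs]
    constructor
    · intro h; exact ⟨j, rfl, h⟩
    · rintro ⟨k, hk, h⟩; rwa [hs.injective hk] at h
  · rw [Function.extend_apply' _ _ _ h]
    constructor
    · intro h'; exact absurd h' (hg i h)
    · rintro ⟨k, hk, -⟩; exact absurd ⟨k, hk⟩ h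

theorem ext_isFace (hs : StrictMono s) (hg : ∀ i, (¬ ∃ j, s j = i) → g i ≠ none)
    {k : ℕ} (τ : CubeFace M) : IsFace k (Function.extend s τ g) ↔ IsFace k τ := by
  unfold IsFace
  have : (Finset.filter (fun i => Function.extend s τ g i = none) Finset.univ)
      = (Finset.filter (fun i => τ i = none) Finset.univ).image s := by
    ext i
    simp only [Finset.mem_filter, Finset.mem_univ, true_and, Finset.mem_image,
      ext_none hs hg]
    constructor
    · rintro ⟨j, h1, h2⟩; exact ⟨j, h2, h1⟩
    · rintro ⟨j, h1, h2⟩; exact ⟨j, h2, h1⟩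
  rw [this, Finset.card_image_of_injective _ hs.injective]

theorem ext_kappa (hs : StrictMono s) (hg : ∀ i, (¬ ∃ j, s j = i) → g i ≠ none)
    (τ : CubeFace M) (j : Fin M) : kappa (Function.extend s τ g) (s j) = kappa τ j := by
  unfold kappa
  have : (Finset.filter (fun i => i < s j ∧ Function.extend s τ g i = none) Finset.univ)
      = (Finset.filter (fun i => i < j ∧ τ i = none) Finset.univ).image s := by
    ext i
    simp only [Finset.mem_filter, Finset.mem_univ, true_and, Finset.mem_image,
      ext_none hs hg]
    constructor
    · rintro ⟨h0, l, rfl, h2⟩; exact ⟨l, ⟨hs.lt_iff_lt.1 h0, h2⟩, rfl⟩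
    · rintro ⟨l, ⟨h0, h1⟩, rfl⟩; exact ⟨hs h0, l, rfl, h1⟩
  rw [this, Finset.card_image_of_injective _ hs.injective]

theorem ext_eq (hs : StrictMono s) {τ : CubeFace M} {x : CubeFace N}
    (h1 : ∀ j, x (s j) = τ j) (h2 : ∀ i, (¬ ∃ j, s j = i) → x i = g i) :
    Function.extend s τ g = x := by
  funext i
  by_cases h : ∃ j, s j = i
  · obtain ⟨j, rfl⟩ := h; rw [ext_apply hs, h1]
  · rw [Function.extend_apply' _ _ _ h, h2 i h]

theorem ext_up (hs : StrictMono s) (τ : CubeFace M) (j : Fin M) :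
    Function.extend s (up τ j) g = up (Function.extend s τ g) (s j) := by
  apply ext_eq hs
  · intro k
    by_cases h : k = j
    · subst h; simp [up]
    · have : s k ≠ s j := fun h' => h (hs.injective h')
      simp [up, h, this, ext_apply hs]
  · intro i hi
    have : i ≠ s j := fun h => hi ⟨j, h.symm⟩
    simp only [up, Function.update_of_ne this]
    exact Function.extend_apply' _ _ _ hi

theorem ext_inAt (hs : StrictMono s) (hg : ∀ i, (¬ ∃ j, s j = i) → g i ≠ none)
    (τ : CubeFace M) (j : Fin M) :
    Function.extend s (inAt τ j) g = inAt (Function.extend s τ g) (s j) := by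
  apply ext_eq hs
  · intro k
    unfold inAt
    rw [ext_kappa hs hg, ext_apply hs]
    simp [hs.injective.eq_iff]
  · intro i hi
    have : i ≠ s j := fun h => hi ⟨j, h.symm⟩
    simp only [inAt, this, if_false]
    exact Function.extend_apply' _ _ _ hi

theorem ext_bad (hs : StrictMono s) (hg : ∀ i, (¬ ∃ j, s j = i) → g i ≠ none)
    (τ : CubeFace M) (j : Fin M) : Bad (Function.extend s τ g) (s j) ↔ Bad τ j := by
  unfold Bad
  rw [ext_kappa hs hg, ext_apply hs]

/-- Embedding of faces. -/
noncomputable def emb (hs : StrictMono s) (hg : ∀ i, (¬ ∃ j, s j = i) → g i ≠ none) {m : ℕ}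
    (τ : FaceT M m) : FaceT N m :=
  ⟨Function.extend s τ.1 g, (ext_isFace hs hg τ.1).2 τ.2⟩

theorem emb_dat (hs : StrictMono s) (hg : ∀ i, (¬ ∃ j, s j = i) → g i ≠ none) {m : ℕ}
    {τ : FaceT M m} {p e k} {gIn : Fin (m + 1) → FaceT M m} (h : Dat τ p e k gIn) :
    Dat (emb hs hg τ) (s p) (s ∘ e) k (fun j => emb hs hg (gIn j)) := by
  refine ⟨(ext_bad hs hg _ _).2 h.bad, hs.comp h.mono, ?_, ?_, ?_⟩
  · intro j
    change up (Function.extend s τ.1 g) (s p) (s (e j)) = none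
    rw [← ext_up hs, ext_apply hs]; exact h.star j
  · intro j
    change Function.extend s (gIn j).1 g = inAt (up (Function.extend s τ.1 g) (s p)) (s (e j))
    rw [← ext_up hs, ← ext_inAt hs hg, h.inn j]
  · simp [h.idx]

end Embed

theorem key_wf (N m : ℕ) : WellFounded (fun a b : FaceT N m => key a.1 < key b.1) :=
  InvImage.wf (fun a : FaceT N m => key a.1) wellFounded_lt

theorem exists_rec {N m : ℕ} {X : Type*} (R : (Fin (m + 1) → X) → (Fin (m + 1) → X))
    (c0 : (g : FaceT N m) → (∀ p, ¬ Bad g.1 p) → X) :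
    ∃ c : FaceT N m → X, (∀ g h, c g = c0 g h) ∧
      ∀ g : FaceT N m, (∃ p, Bad g.1 p) →
        ∃ p e k gIn, Dat g p e k gIn ∧ c g = R (fun j => c (gIn j)) k := by
  classical
  have H : ∀ g : FaceT N m, ¬ (∀ p, ¬ Bad g.1 p) → ∃ p e k gIn, Dat g p e k gIn := by
    intro g h
    push Not at h
    obtain ⟨p, hp⟩ := h
    exact ⟨p, Dat.exists g p hp⟩
  choose p e k gIn hd using H
  let F : (g : FaceT N m) → ((g' : FaceT N m) → key g'.1 < key g.1 → X) → X := fun g rec =>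
    if h : ∀ p, ¬ Bad g.1 p then c0 g h
    else R (fun j => rec (gIn g h j) ((hd g h).lt j)) (k g h)
  have hfix := (key_wf N m).fix_eq F
  refine ⟨(key_wf N m).fix F, ?_, ?_⟩
  · intro g h
    rw [hfix]
    exact dif_pos h
  · intro g h
    have h' : ¬ (∀ p, ¬ Bad g.1 p) := by push Not; exact h
    refine ⟨_, _, _, _, hd g h', ?_⟩
    rw [hfix]
    exact dif_neg h'

theorem main_step {N m : ℕ} {X : Type*} (R : (Fin (m + 1) → X) → (Fin (m + 1) → X))
    (hR : ∀ c0 : (g : FaceT (m + 2) m) → X,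
      ∃ C : FaceT (m + 2) m → X, Permitted (n := m + 1) R C ∧
        ∀ g : FaceT (m + 2) m, (∀ p, ¬ Bad g.1 p) → C g = c0 g)
    (c : FaceT N m → X)
    (hc : ∀ g : FaceT N m, (∃ p, Bad g.1 p) →
        ∃ p e k gIn, Dat g p e k gIn ∧ c g = R (fun j => c (gIn j)) k) (g : FaceT N m) :
    ∀ p e k gIn, Dat g p e k gIn → c g = R (fun j => c (gIn j)) k := by
  induction g using (key_wf N m).induction with
  | _ g ih =>
  intro p e k gIn hd
  obtain ⟨q, e', k', gIn', hd', hcg⟩ := hc g ⟨p, hd.bad⟩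
  by_cases hpq : p = q
  · subst hpq
    obtain ⟨h1, h2⟩ := hd.unique hd'
    rw [h1, h2]; exact hcg
  let S := insert p (insert q (Finset.filter (fun i => g.1 i = none) Finset.univ))
  have hgp : g.1 p ≠ none := by rw [hd.bad]; simp
  have hgq : g.1 q ≠ none := by rw [hd'.bad]; simp
  have hS : S.card = m + 2 := by
    have hm : (Finset.filter (fun i => g.1 i = none) Finset.univ).card = m := g.2
    rw [Finset.card_insert_of_notMem, Finset.card_insert_of_notMem, hm]
    · simpa using hgq
    · simp [hpq, hgp]
  let s : Fin (m + 2) → Fin N := S.orderEmbOfFin hS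
  have hs : StrictMono s := (S.orderEmbOfFin hS).strictMono
  have hrange : ∀ i, i ∈ S → ∃ j, s j = i := by
    intro i hi
    have : i ∈ Set.range (S.orderEmbOfFin hS) := by
      rw [Finset.range_orderEmbOfFin]; exact hi
    exact this
  have hg : ∀ i, (¬ ∃ j, s j = i) → g.1 i ≠ none := by
    intro i hi hn
    exact hi (hrange i (by simp [S, hn]))
  obtain ⟨C, hC, hC0⟩ := hR (fun τ => c (emb hs hg τ))
  have key1 : ∀ τ : FaceT (m + 2) m, key (emb hs hg τ).1 < key g.1 →
      C τ = c (emb hs hg τ) := by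
    intro τ
    induction τ using (InvImage.wf (emb hs hg) (key_wf N m)).induction with
    | _ τ ih2 =>
    intro hlt
    by_cases hb : ∀ p, ¬ Bad τ.1 p
    · exact hC0 τ hb
    · push Not at hb
      obtain ⟨r, hr⟩ := hb
      obtain ⟨e1, k1, gIn1, hd1⟩ := Dat.exists τ r hr
      have hd2 := emb_dat hs hg hd1
      rw [permitted_dat hC hd1, ih _ hlt _ _ _ _ hd2]
      congr 1
      funext j
      exact ih2 _ (hd2.lt j) ((hd2.lt j).trans hlt)
  have hgs : Function.extend s (g.1 ∘ s) g.1 = g.1 :=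
    ext_eq hs (fun j => rfl) (fun i _ => rfl)
  have hgf : IsFace m (Function.extend s (g.1 ∘ s) g.1) := hgs.symm ▸ g.2
  let τ : FaceT (m + 2) m := ⟨g.1 ∘ s, (ext_isFace hs hg _).1 hgf⟩
  have hτ : emb hs hg τ = g := Subtype.ext hgs
  have key2 : ∀ p e k gIn, p ∈ S → Dat g p e k gIn → C τ = R (fun j => c (gIn j)) k := by
    intro p e k gIn hpS hd
    obtain ⟨r, rfl⟩ := hrange p hpS
    have hr : Bad τ.1 r := by
      rw [← ext_bad hs hg]
      have := congrArg Subtype.val hτ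
      change Function.extend s τ.1 g.1 = g.1 at this
      rw [this]; exact hd.bad
    obtain ⟨e1, k1, gIn1, hd1⟩ := Dat.exists τ r hr
    have hd2 := emb_dat hs hg hd1
    rw [hτ] at hd2
    obtain ⟨h1, h2⟩ := hd.unique hd2
    rw [h1, h2, permitted_dat hC hd1]
    congr 1
    funext j
    exact key1 _ (hd2.lt j)
  rw [hcg, ← key2 _ _ _ _ (by simp [S]) hd', ← key2 _ _ _ _ (by simp [S]) hd]

end CubeAux

/-- If `R` satisfies the set-theoretic `n`-simplex equation — formulated as: every
coloring of the absolutely incoming `(n-1)`-faces of the `(n+1)`-cube extends to a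
permitted coloring of `I^{n+1}` — then for every `N ≥ n`, every coloring of the
absolutely incoming `(n-1)`-faces of `I^N` extends to a *unique* permitted coloring
of `I^N`. -/
theorem stmt8 (n : ℕ) (hn : 2 ≤ n) (X : Type*) (R : (Fin n → X) → (Fin n → X))
    (hR : ∀ c0 : AbsIn (n + 1) n → X,
      ∃ c : FaceT (n + 1) (n - 1) → X, Permitted R c ∧ resAbs c = c0) :
    ∀ N : ℕ, n ≤ N → ∀ c0 : AbsIn N n → X,
      ∃! c : FaceT N (n - 1) → X, Permitted R c ∧ resAbs c = c0 := by
  obtain ⟨m, rfl⟩ : ∃ m, n = m + 1 := ⟨n - 1, by omega⟩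
  intro N hN c0
  have hR' : ∀ c0 : (g : FaceT (m + 2) m) → X,
      ∃ C : FaceT (m + 2) m → X, Permitted (n := m + 1) R C ∧
        ∀ g : FaceT (m + 2) m, (∀ p, ¬ CubeAux.Bad g.1 p) → C g = c0 g := by
    intro d
    obtain ⟨C, h1, h2⟩ := hR (fun g => d g.1)
    refine ⟨C, h1, fun g hg => ?_⟩
    exact congrFun h2 ⟨g, (CubeAux.order_iff (by omega) g.1 g.2).2 hg⟩
  obtain ⟨c, hc0, hc⟩ := CubeAux.exists_rec R
    (fun (g : FaceT N m) h => c0 ⟨g, (CubeAux.order_iff hN g.1 g.2).2 h⟩)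
  refine ⟨c, ⟨CubeAux.permitted_of (CubeAux.main_step R hR' c hc), ?_⟩, ?_⟩
  · funext g
    exact hc0 g.1 ((CubeAux.order_iff hN g.1.1 g.1.2).1 g.2)
  · rintro c' ⟨hp, hr⟩
    funext g
    induction g using (CubeAux.key_wf N m).induction with
    | _ g ih =>
    by_cases hb : ∀ p, ¬ CubeAux.Bad g.1 p
    · rw [hc0 g hb]
      exact congrFun hr ⟨g, (CubeAux.order_iff hN g.1 g.2).2 hb⟩
    · push Not at hb
      obtain ⟨p, e, k, gIn, hd, hcg⟩ := hc g hb
      rw [hcg, CubeAux.permitted_dat hp hd]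
      congr 1
      funext j
      exact ih _ (hd.lt j)
end
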